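/- Let c ∈ R \ {0}, let η ∈ R be a unit, and let b, d, d' ∈ R. Then the operator S_c* U^{-d} U^b S_η U^{d'} S_c on ℓ²(R) equals 0 if −d + b + η d' ∉ cR, and equals U^{(−d + b + η d')/c} S_η if −d + b + η d' ∈ cR (where (−d + b + η d')/c denotes the unique element r ∈ R with cr = −d + b + η d'). -/

import Mathlib

open NumberField
open scoped Classical

theorem aux_ext {ι : Type*} (A B : lp (fun _ : ι => ℂ) 2 →L[ℂ] lp (fun _ : ι => ℂ) 2)
    (h : ∀ i, A (lp.single 2 i (1 : ℂ)) = B (lp.single 2 i (1 : ℂ))) : A = B := by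
  ext1 f
  have hf := lp.hasSum_single (p := 2) (by norm_num) f
  have h1 := hf.mapL A
  have h2 := hf.mapL B
  refine h1.unique ?_
  convert h2 using 2 with i
  have : lp.single (E := fun _ : ι => ℂ) 2 i (f i) = (f i) • lp.single 2 i (1 : ℂ) := by
    rw [← lp.single_smul]; simp
  rw [this, map_smul, map_smul, h]

theorem aux_coord {ι : Type*} (A : lp (fun _ : ι => ℂ) 2 →L[ℂ] lp (fun _ : ι => ℂ) 2)
    (u v t : ι) (h : A (lp.single 2 u (1 : ℂ)) = lp.single 2 v (1 : ℂ)) :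
    (ContinuousLinearMap.adjoint A (lp.single 2 t (1 : ℂ))) u = if v = t then 1 else 0 := by
  have h1 := ContinuousLinearMap.adjoint_inner_right A (lp.single 2 u (1 : ℂ))
    (lp.single 2 t (1 : ℂ))
  rw [h, lp.inner_single_left, lp.inner_single_left] at h1
  simpa [Pi.single_apply] using h1

/-- Let `c ∈ R \ {0}`, let `η ∈ R` be a unit, and let `b, d, d' ∈ R`.  Then the operator
`S_c* U^{-d} U^b S_η U^{d'} S_c` on `ℓ²(R)` equals `0` if `−d + b + ηd' ∉ cR`, and equals
`U^{(−d + b + ηd')/c} S_η` if `−d + b + ηd' = cr ∈ cR`.  Here `U` and `S` are the families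
of bounded operators on `ℓ²(R)` determined on the canonical orthonormal basis by
`U^b ε_r = ε_{b+r}` and `S_a ε_r = ε_{ar}`, and `S_c*` is the adjoint of `S_c`. -/
theorem stmt4 (K : Type*) [Field K] [NumberField K]
    (U S : 𝓞 K → (lp (fun _ : 𝓞 K => ℂ) 2 →L[ℂ] lp (fun _ : 𝓞 K => ℂ) 2))
    (hU : ∀ b r : 𝓞 K, U b (lp.single 2 r (1 : ℂ)) = lp.single 2 (b + r) (1 : ℂ))
    (hS : ∀ a : 𝓞 K, a ≠ 0 → ∀ r : 𝓞 K,
      S a (lp.single 2 r (1 : ℂ)) = lp.single 2 (a * r) (1 : ℂ))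
    (c : 𝓞 K) (hc : c ≠ 0) (η : 𝓞 K) (hη : IsUnit η) (b d d' : 𝓞 K) :
    (¬ c ∣ (-d + b + η * d') →
      (ContinuousLinearMap.adjoint (S c)).comp
        ((U (-d)).comp ((U b).comp ((S η).comp ((U d').comp (S c))))) = 0) ∧
    (∀ r : 𝓞 K, c * r = -d + b + η * d' →
      (ContinuousLinearMap.adjoint (S c)).comp
        ((U (-d)).comp ((U b).comp ((S η).comp ((U d').comp (S c))))) =
      (U r).comp (S η)) := by
  have key : ∀ s, ((ContinuousLinearMap.adjoint (S c)).comp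
        ((U (-d)).comp ((U b).comp ((S η).comp ((U d').comp (S c)))))) (lp.single 2 s (1 : ℂ)) =
      ContinuousLinearMap.adjoint (S c) (lp.single 2 ((-d + b + η * d') + c * (η * s)) (1 : ℂ)) := by
    intro s
    simp only [ContinuousLinearMap.comp_apply, hS c hc, hU, hS η hη.ne_zero]
    congr 2
    ring
  constructor
  · intro h
    apply aux_ext
    intro s
    rw [key]
    ext u
    rw [aux_coord (S c) u (c * u) _ (hS c hc u), if_neg]
    · simp
    · intro e
      exact h ⟨u - η * s, by linear_combination -e⟩
  · intro r hr
    apply aux_ext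
    intro s
    rw [key]
    ext u
    rw [aux_coord (S c) u (c * u) _ (hS c hc u)]
    simp only [ContinuousLinearMap.comp_apply, hU, hS η hη.ne_zero]
    rw [← hr, ← mul_add]
    simp [hc, Pi.single_apply]
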